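/- Let V₁, V_s, V₂ be finite-dimensional real vector spaces. If D₁ is a Dirac structure on V₁ × V_s and D₂ is a Dirac structure on V_s × V₂, then the composition D₁ ‖ D₂ is a Dirac structure on V₁ × V₂. -/

import Mathlib

/-- The symmetric pairing on `V × V*`: `⟨⟨(v,α),(w,β)⟩⟩ = α(w) + β(v)`. -/
def symPair {V : Type*} [AddCommGroup V] [Module ℝ V]
    (x y : V × Module.Dual ℝ V) : ℝ := x.2 y.1 + y.2 x.1

/-- A Dirac structure on `V` is a subspace `D ⊆ V × V*` with `D = D^⊥`,
where the orthogonal complement is taken relative to the symmetric pairing. -/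
def IsDirac {V : Type*} [AddCommGroup V] [Module ℝ V]
    (D : Set (V × Module.Dual ℝ V)) : Prop :=
  ∀ y, y ∈ D ↔ ∀ x ∈ D, symPair x y = 0

/-- The identification of `V₁* × V₂*` with `(V₁ × V₂)*`:
`(α₁, α₂) ↦ ((w₁,w₂) ↦ α₁(w₁) + α₂(w₂))`. -/
def dualProd {V₁ V₂ : Type*} [AddCommGroup V₁] [Module ℝ V₁]
    [AddCommGroup V₂] [Module ℝ V₂]
    (α₁ : Module.Dual ℝ V₁) (α₂ : Module.Dual ℝ V₂) : Module.Dual ℝ (V₁ × V₂) :=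
  α₁.comp (LinearMap.fst ℝ V₁ V₂) + α₂.comp (LinearMap.snd ℝ V₁ V₂)

/-- The composition `D₁ ‖ D₂` of a Dirac structure `D₁` on `V₁ × V_s` with a
Dirac structure `D₂` on `V_s × V₂`: all `(v₁,v₂,α₁,α₂)` such that there exist
`v_s ∈ V_s` and `α_s ∈ V_s*` with `(v₁,v_s,α₁,α_s) ∈ D₁` and
`(−v_s,v₂,α_s,α₂) ∈ D₂`. -/
def diracComp {V₁ Vs V₂ : Type*} [AddCommGroup V₁] [Module ℝ V₁]
    [AddCommGroup Vs] [Module ℝ Vs] [AddCommGroup V₂] [Module ℝ V₂]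
    (D₁ : Set ((V₁ × Vs) × Module.Dual ℝ (V₁ × Vs)))
    (D₂ : Set ((Vs × V₂) × Module.Dual ℝ (Vs × V₂))) :
    Set ((V₁ × V₂) × Module.Dual ℝ (V₁ × V₂)) :=
  {p | ∃ (vs : Vs) (αs : Module.Dual ℝ Vs)
        (α₁ : Module.Dual ℝ V₁) (α₂ : Module.Dual ℝ V₂),
      p.2 = dualProd α₁ α₂ ∧
      ((p.1.1, vs), dualProd α₁ αs) ∈ D₁ ∧
      ((-vs, p.1.2), dualProd αs α₂) ∈ D₂}

/-!
For a linear map `f : V → W`, a Dirac structure on `W` pulls back along `f` and one on `V` pushes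
forward along `f`. The composition `D₁ ‖ D₂` is obtained from the product Dirac structure on
`(V₁ × Vs) × (Vs × V₂)` by pulling it back along `((v₁, v₂), vs) ↦ ((v₁, vs), (-vs, v₂))` and
pushing the result forward along `((v₁, v₂), vs) ↦ (v₁, v₂)`.

Pullback and pushforward preserve `D = D^⊥` for the same reason: a functional on a subspace `D` that
vanishes on `D ∩ ker T` factors through `T`. A vector orthogonal to the pullback (pushforward) lifts
to a vector orthogonal to `D ∩ ker T` for a suitable `T`, and the factorization provides the
correction that makes the lift orthogonal to all of `D`.
-/

section Factorization

variable {K E F : Type*} [Field K] [AddCommGroup E] [Module K E] [AddCommGroup F] [Module K F]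

theorem exists_dual_comp_eq_of_ker_le_ker (T : E →ₗ[K] F) (φ : Module.Dual K E)
    (hφ : LinearMap.ker T ≤ LinearMap.ker φ) : ∃ g : Module.Dual K F, g ∘ₗ T = φ := by
  have hmem : φ ∈ LinearMap.range T.dualMap := by
    rw [T.range_dualMap_eq_dualAnnihilator_ker, Submodule.mem_dualAnnihilator]
    exact hφ
  exact hmem

theorem exists_dual_comp_eqOn_submodule (S : Submodule K E) (T : E →ₗ[K] F) (φ : Module.Dual K E)
    (hφ : ∀ x ∈ S, T x = 0 → φ x = 0) : ∃ g : Module.Dual K F, ∀ x ∈ S, g (T x) = φ x := by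
  obtain ⟨g, hg⟩ := exists_dual_comp_eq_of_ker_le_ker (T ∘ₗ S.subtype) (φ ∘ₗ S.subtype)
    fun x hx => hφ x x.2 hx
  exact ⟨g, fun x hx => LinearMap.congr_fun hg ⟨x, hx⟩⟩

end Factorization

section Dirac

variable {V W : Type*} [AddCommGroup V] [Module ℝ V] [AddCommGroup W] [Module ℝ W]

variable (V) in
/-- The symmetric pairing `symPair` bundled as a bilinear form on `V × V*`. -/
def symPairForm : LinearMap.BilinForm ℝ (V × Module.Dual ℝ V) :=
  LinearMap.mk₂ ℝ symPair
    (fun x x' y => by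
      simp only [symPair, Prod.fst_add, Prod.snd_add, map_add, LinearMap.add_apply]; ring)
    (fun c x y => by
      simp only [symPair, Prod.smul_fst, Prod.smul_snd, map_smul, LinearMap.smul_apply, smul_add])
    (fun x y y' => by
      simp only [symPair, Prod.fst_add, Prod.snd_add, map_add, LinearMap.add_apply]; ring)
    (fun c x y => by
      simp only [symPair, Prod.smul_fst, Prod.smul_snd, map_smul, LinearMap.smul_apply, smul_add])

namespace IsDirac

variable {D : Set (V × Module.Dual ℝ V)}

/-- A Dirac structure as a submodule of `V × V*`: being its own orthogonal complement, it is closed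
under the linear operations. -/
def toSubmodule (h : IsDirac D) : Submodule ℝ (V × Module.Dual ℝ V) where
  carrier := D
  zero_mem' := (h 0).2 fun x _ => map_zero (symPairForm V x)
  add_mem' {y z} hy hz := (h _).2 fun x hx => by
    have hadd : symPair x (y + z) = symPair x y + symPair x z := map_add (symPairForm V x) y z
    rw [hadd, (h y).1 hy x hx, (h z).1 hz x hx, add_zero]
  smul_mem' c y hy := (h _).2 fun x hx => by
    have hsmul : symPair x (c • y) = c * symPair x y := map_smul (symPairForm V x) c y
    rw [hsmul, (h y).1 hy x hx, mul_zero]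

theorem zero_mem (h : IsDirac D) : 0 ∈ D :=
  h.toSubmodule.zero_mem

theorem exists_dual_symPair_eq {F : Type*} [AddCommGroup F] [Module ℝ F] (h : IsDirac D)
    (T : V × Module.Dual ℝ V →ₗ[ℝ] F) (y : V × Module.Dual ℝ V)
    (hy : ∀ x ∈ D, T x = 0 → symPair x y = 0) :
    ∃ g : Module.Dual ℝ F, ∀ x ∈ D, g (T x) = symPair x y :=
  exists_dual_comp_eqOn_submodule h.toSubmodule T ((symPairForm V).flip y) hy

end IsDirac

/-- The product of Dirac structures on `V` and `W`, with `(V × W)*` identified with `V* × W*` by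
`dualProd`. -/
def diracProd (D : Set (V × Module.Dual ℝ V)) (E : Set (W × Module.Dual ℝ W)) :
    Set ((V × W) × Module.Dual ℝ (V × W)) :=
  {p | ∃ (α : Module.Dual ℝ V) (β : Module.Dual ℝ W),
      p.2 = dualProd α β ∧ (p.1.1, α) ∈ D ∧ (p.1.2, β) ∈ E}

/-- The pullback (backward image) of a Dirac structure on `W` along `f : V → W`. -/
def diracComap (f : V →ₗ[ℝ] W) (D : Set (W × Module.Dual ℝ W)) : Set (V × Module.Dual ℝ V) :=
  {p | ∃ α : Module.Dual ℝ W, α ∘ₗ f = p.2 ∧ (f p.1, α) ∈ D}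

/-- The pushforward (forward image) of a Dirac structure on `V` along `f : V → W`. -/
def diracMap (f : V →ₗ[ℝ] W) (D : Set (V × Module.Dual ℝ V)) : Set (W × Module.Dual ℝ W) :=
  {p | ∃ v : V, f v = p.1 ∧ (v, p.2 ∘ₗ f) ∈ D}

theorem exists_eq_dualProd (γ : Module.Dual ℝ (V × W)) :
    ∃ (α : Module.Dual ℝ V) (β : Module.Dual ℝ W), γ = dualProd α β :=
  ⟨_, _, (LinearMap.coprod_comp_inl_inr γ).symm⟩

theorem symPair_dualProd (x y : V × W) (α α' : Module.Dual ℝ V) (β β' : Module.Dual ℝ W) :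
    symPair (x, dualProd α β) (y, dualProd α' β') =
      symPair (x.1, α) (y.1, α') + symPair (x.2, β) (y.2, β') :=
  add_add_add_comm _ _ _ _

namespace IsDirac

theorem prod {D : Set (V × Module.Dual ℝ V)} {E : Set (W × Module.Dual ℝ W)}
    (hD : IsDirac D) (hE : IsDirac E) : IsDirac (diracProd D E) := by
  rintro ⟨y, γ⟩
  constructor
  · rintro ⟨α, β, rfl, hα, hβ⟩ ⟨x, -⟩ ⟨α', β', rfl, hα', hβ'⟩
    rw [symPair_dualProd, (hD _).1 hα _ hα', (hE _).1 hβ _ hβ', add_zero]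
  intro hy
  obtain ⟨α, β, rfl⟩ := exists_eq_dualProd γ
  refine ⟨α, β, rfl, (hD _).2 fun x hx => ?_, (hE _).2 fun x hx => ?_⟩
  · have hsum := hy ((x.1, 0), dualProd x.2 0) ⟨x.2, 0, rfl, hx, hE.zero_mem⟩
    rw [symPair_dualProd] at hsum
    simpa [symPair] using hsum
  · have hsum := hy ((0, x.1), dualProd 0 x.2) ⟨0, x.2, rfl, hD.zero_mem, hx⟩
    rw [symPair_dualProd] at hsum
    simpa [symPair] using hsum

theorem comap {D : Set (W × Module.Dual ℝ W)} (h : IsDirac D) (f : V →ₗ[ℝ] W) :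
    IsDirac (diracComap f D) := by
  rintro ⟨v, β⟩
  constructor
  · rintro ⟨γ, rfl, hγ⟩ ⟨u, -⟩ ⟨α, rfl, hα⟩
    exact (h _).1 hγ _ hα
  intro hy
  obtain ⟨γ, rfl⟩ : ∃ γ : Module.Dual ℝ W, γ ∘ₗ f = β := by
    refine exists_dual_comp_eq_of_ker_le_ker f β fun u hu => ?_
    have hmem : (u, 0) ∈ diracComap f D :=
      ⟨0, LinearMap.zero_comp f, by rw [LinearMap.mem_ker.1 hu]; exact h.zero_mem⟩
    simpa [symPair] using hy _ hmem
  -- `γ` may be corrected by any functional that vanishes on the range of `f`.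
  obtain ⟨δ, hδ⟩ := h.exists_dual_symPair_eq
    ((LinearMap.range f).mkQ ∘ₗ LinearMap.fst ℝ W (Module.Dual ℝ W)) (f v, γ) <| by
      rintro ⟨w, α⟩ hα hw
      obtain ⟨u, rfl⟩ := (Submodule.Quotient.mk_eq_zero _).1 hw
      exact hy (u, α ∘ₗ f) ⟨α, rfl, hα⟩
  refine ⟨γ - δ ∘ₗ (LinearMap.range f).mkQ, ?_, (h _).2 fun x hx => ?_⟩
  · rw [LinearMap.sub_comp, LinearMap.comp_assoc, LinearMap.range_mkQ_comp, LinearMap.comp_zero,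
      sub_zero]
  · have hx' := hδ x hx
    simp only [symPair, LinearMap.sub_apply, LinearMap.comp_apply, LinearMap.fst_apply] at hx' ⊢
    linear_combination -hx'

theorem map {D : Set (V × Module.Dual ℝ V)} (h : IsDirac D) (f : V →ₗ[ℝ] W)
    [FiniteDimensional ℝ (LinearMap.ker f)] : IsDirac (diracMap f D) := by
  rintro ⟨w, β⟩
  constructor
  · rintro ⟨v, rfl, hv⟩ ⟨-, α⟩ ⟨u, rfl, hu⟩
    exact (h _).1 hv _ hu
  intro hy
  obtain ⟨v, rfl⟩ : w ∈ LinearMap.range f := by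
    refine (Subspace.forall_mem_dualAnnihilator_apply_eq_zero_iff _ w).1 fun α hα => ?_
    have hαf : α ∘ₗ f = 0 := LinearMap.ext fun u =>
      (Submodule.mem_dualAnnihilator α).1 hα _ ⟨u, rfl⟩
    have hmem : (0, α) ∈ diracMap f D := ⟨0, map_zero f, by rw [hαf]; exact h.zero_mem⟩
    simpa [symPair] using hy _ hmem
  -- `v` may be corrected by any `k ∈ ker f`; by reflexivity, any functional on `(ker f)*` is one.
  obtain ⟨g, hg⟩ := h.exists_dual_symPair_eq
    ((LinearMap.ker f).dualRestrict ∘ₗ LinearMap.snd ℝ V (Module.Dual ℝ V)) (v, β ∘ₗ f) <| by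
      rintro ⟨u, α⟩ hα hker
      obtain ⟨γ, rfl⟩ := exists_dual_comp_eq_of_ker_le_ker f α fun k hk =>
        LinearMap.congr_fun hker ⟨k, hk⟩
      exact hy (f u, γ) ⟨u, rfl, hα⟩
  let k : LinearMap.ker f := (Module.evalEquiv ℝ (LinearMap.ker f)).symm g
  have hgk (α : Module.Dual ℝ V) : g ((LinearMap.ker f).dualRestrict α) = α k :=
    (Module.apply_evalEquiv_symm_apply ℝ _ _ g).symm
  have hfk : f k = 0 := k.2
  refine ⟨v - k, by rw [map_sub, hfk, sub_zero], (h _).2 fun x hx => ?_⟩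
  have hx' := hg x hx
  simp only [LinearMap.comp_apply, LinearMap.snd_apply, hgk, symPair, map_sub] at hx' ⊢
  linear_combination -hx'

end IsDirac

end Dirac

section Composition

variable {V₁ Vs V₂ : Type*} [AddCommGroup V₁] [Module ℝ V₁] [AddCommGroup Vs] [Module ℝ Vs]
  [AddCommGroup V₂] [Module ℝ V₂]

variable (V₁ Vs V₂) in
/-- The map `((v₁, v₂), vs) ↦ ((v₁, vs), (-vs, v₂))` that identifies the shared variables of two
composed Dirac structures, with the sign convention of `diracComp`. -/
def interconnection : (V₁ × V₂) × Vs →ₗ[ℝ] (V₁ × Vs) × (Vs × V₂) :=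
  ((LinearMap.fst ℝ V₁ V₂).prodMap LinearMap.id).prod
    ((-LinearMap.snd ℝ (V₁ × V₂) Vs).prod (LinearMap.snd ℝ V₁ V₂ ∘ₗ LinearMap.fst ℝ (V₁ × V₂) Vs))

theorem interconnection_apply (v₁ : V₁) (v₂ : V₂) (vs : Vs) :
    interconnection V₁ Vs V₂ ((v₁, v₂), vs) = ((v₁, vs), (-vs, v₂)) :=
  rfl

theorem dualProd_comp_interconnection_eq_comp_fst_iff (α₁ : Module.Dual ℝ V₁)
    (αs αs' : Module.Dual ℝ Vs) (α₂ : Module.Dual ℝ V₂) (β : Module.Dual ℝ (V₁ × V₂)) :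
    dualProd (dualProd α₁ αs) (dualProd αs' α₂) ∘ₗ interconnection V₁ Vs V₂ =
        β ∘ₗ LinearMap.fst ℝ (V₁ × V₂) Vs ↔ β = dualProd α₁ α₂ ∧ αs = αs' := by
  have heval (v₁ : V₁) (v₂ : V₂) (vs : Vs) :
      dualProd (dualProd α₁ αs) (dualProd αs' α₂) (interconnection V₁ Vs V₂ ((v₁, v₂), vs)) =
        dualProd α₁ α₂ (v₁, v₂) + (αs vs - αs' vs) := by
    simp only [interconnection_apply, dualProd, LinearMap.add_apply, LinearMap.comp_apply,
      LinearMap.fst_apply, LinearMap.snd_apply, map_neg]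
    ring
  constructor
  · intro h
    have happly (v₁ : V₁) (v₂ : V₂) (vs : Vs) :
        dualProd α₁ α₂ (v₁, v₂) + (αs vs - αs' vs) = β (v₁, v₂) :=
      (heval v₁ v₂ vs).symm.trans (LinearMap.congr_fun h ((v₁, v₂), vs))
    refine ⟨LinearMap.ext fun v => ?_, LinearMap.ext fun vs => ?_⟩
    · simpa using (happly v.1 v.2 0).symm
    · simpa [← Prod.zero_eq_mk, sub_eq_zero] using happly 0 0 vs
  · rintro ⟨rfl, rfl⟩
    refine LinearMap.ext fun ⟨⟨v₁, v₂⟩, vs⟩ => (heval v₁ v₂ vs).trans ?_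
    rw [sub_self, add_zero, LinearMap.comp_apply, LinearMap.fst_apply]

theorem diracComp_eq_diracMap_diracComap_diracProd
    (D₁ : Set ((V₁ × Vs) × Module.Dual ℝ (V₁ × Vs)))
    (D₂ : Set ((Vs × V₂) × Module.Dual ℝ (Vs × V₂))) :
    diracComp D₁ D₂ = diracMap (LinearMap.fst ℝ (V₁ × V₂) Vs)
      (diracComap (interconnection V₁ Vs V₂) (diracProd D₁ D₂)) := by
  ext ⟨⟨v₁, v₂⟩, β⟩
  constructor
  · rintro ⟨vs, αs, α₁, α₂, hβ, hD₁, hD₂⟩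
    refine ⟨((v₁, v₂), vs), rfl, dualProd (dualProd α₁ αs) (dualProd αs α₂), ?_, ?_⟩
    · exact (dualProd_comp_interconnection_eq_comp_fst_iff ..).2 ⟨hβ, rfl⟩
    · exact ⟨_, _, rfl, hD₁, hD₂⟩
  · rintro ⟨⟨-, vs⟩, rfl, -, hpull, γ₁, γ₂, rfl, hD₁, hD₂⟩
    obtain ⟨α₁, αs, rfl⟩ := exists_eq_dualProd γ₁
    obtain ⟨αs', α₂, rfl⟩ := exists_eq_dualProd γ₂
    obtain ⟨hβ, rfl⟩ := (dualProd_comp_interconnection_eq_comp_fst_iff ..).1 hpull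
    exact ⟨vs, αs, α₁, α₂, hβ, hD₁, hD₂⟩

theorem diracComp_isDirac_general [FiniteDimensional ℝ Vs]
    (D₁ : Set ((V₁ × Vs) × Module.Dual ℝ (V₁ × Vs))) (h₁ : IsDirac D₁)
    (D₂ : Set ((Vs × V₂) × Module.Dual ℝ (Vs × V₂))) (h₂ : IsDirac D₂) :
    IsDirac (diracComp D₁ D₂) := by
  have hker : FiniteDimensional ℝ (LinearMap.ker (LinearMap.fst ℝ (V₁ × V₂) Vs)) := by
    rw [LinearMap.ker_fst]
    infer_instance
  rw [diracComp_eq_diracMap_diracComap_diracProd]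
  exact ((h₁.prod h₂).comap _).map _

end Composition

/-- If `D₁` is a Dirac structure on `V₁ × V_s` and `D₂` is a Dirac structure
on `V_s × V₂`, then the composition `D₁ ‖ D₂` is a Dirac structure on
`V₁ × V₂`. -/
theorem diracComp_isDirac
    {V₁ Vs V₂ : Type*}
    [AddCommGroup V₁] [Module ℝ V₁] [FiniteDimensional ℝ V₁]
    [AddCommGroup Vs] [Module ℝ Vs] [FiniteDimensional ℝ Vs]
    [AddCommGroup V₂] [Module ℝ V₂] [FiniteDimensional ℝ V₂]
    (D₁ : Set ((V₁ × Vs) × Module.Dual ℝ (V₁ × Vs))) (h₁ : IsDirac D₁)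
    (D₂ : Set ((Vs × V₂) × Module.Dual ℝ (Vs × V₂))) (h₂ : IsDirac D₂) :
    IsDirac (diracComp D₁ D₂) := by
  exact diracComp_isDirac_general D₁ h₁ D₂ h₂
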